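/- As n → ∞, the total pair sum over all pairs with at least two gaps vanishes: Σ_{s=1}^{n−2} Σ_{g=2}^{min{s+1, ⌊(n−s)/2⌋}} c_{s,g} → 0. -/

import Mathlib

open MeasureTheory Filter

namespace RandomHypercube

/-- Index of a (potential) hypercube edge: the lower endpoint `A` together with the
direction `i` that is added, representing the edge from `A` to `A ∪ {i}`. -/
abbrev EdgeIdx (n : ℕ) := Finset (Fin n) × Fin n

/-- The sample space: an i.i.d. Uniform[0,1] weight for each edge index. -/
abbrev CubeOmega (n : ℕ) := EdgeIdx n → ℝ

/-- The product of uniform measures on [0,1], one for each edge. -/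
noncomputable def cubeMeasure (n : ℕ) : Measure (CubeOmega n) :=
  Measure.pi fun _ => (volume : Measure ℝ).restrict (Set.Icc 0 1)

/-- The vertex visited by the direct path associated to the permutation `σ`
just before taking its `j`-th step: the image under `σ` of `{0, …, j-1}`. -/
def initSeg (n : ℕ) (σ : Equiv.Perm (Fin n)) (j : Fin n) : Finset (Fin n) :=
  (Finset.univ.filter fun i => i < j).image σ

/-- The edge used in the `j`-th step of the direct path associated to `σ`. -/
def pathEdge (n : ℕ) (σ : Equiv.Perm (Fin n)) (j : Fin n) : EdgeIdx n :=
  (initSeg n σ j, σ j)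

/-- The direct path associated to `σ` is accessible if its successive edge
weights are strictly increasing. -/
def Accessible (n : ℕ) (σ : Equiv.Perm (Fin n)) (ω : CubeOmega n) : Prop :=
  StrictMono fun j : Fin n => ω (pathEdge n σ j)

/-- The number of accessible direct paths from `∅` to `[n]`. -/
noncomputable def X (n : ℕ) (ω : CubeOmega n) : ℕ :=
  Nat.card {σ : Equiv.Perm (Fin n) // Accessible n σ ω}


/-- The set of steps `j` at which the direct paths of `σ` and `σ'` use the same edge
(shared edges necessarily occur at the same level in both paths). -/
def sharedSteps (n : ℕ) (σ σ' : Equiv.Perm (Fin n)) : Finset (Fin n) :=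
  Finset.univ.filter fun j => pathEdge n σ j = pathEdge n σ' j

/-- Given the sorted list `l` of steps (levels) of the shared edges, the gap vector:
the number of edges before the first shared edge, strictly between consecutive shared
edges, and after the last shared edge. -/
def gapsOfList (n : ℕ) (l : List ℕ) : List ℕ :=
  List.zipWith (fun a b => b - a) (0 :: l.map (· + 1)) (l ++ [n])

/-- The gap vector of the direct path of `σ'` relative to that of `σ`. -/
def gapVector (n : ℕ) (σ σ' : Equiv.Perm (Fin n)) : List ℕ :=
  gapsOfList n (((sharedSteps n σ σ').sort (· ≤ ·)).map Fin.val)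

/-- The number of (nontrivial) gaps between the direct paths of `σ` and `σ'`:
the number of nonzero entries of the gap vector. -/
def numGaps (n : ℕ) (σ σ' : Equiv.Perm (Fin n)) : ℕ :=
  ((gapVector n σ σ').filter (· != 0)).length

/-- The probability that the direct paths of `σ` and `σ'` are both accessible. -/
noncomputable def pairProb (n : ℕ) (σ σ' : Equiv.Perm (Fin n)) : ℝ :=
  (cubeMeasure n {ω | Accessible n σ ω ∧ Accessible n σ' ω}).toReal

/-- `c n s g`: the sum, over all ordered pairs of direct paths sharing exactly `s`
edges with `g` gaps, of the probability that both paths are accessible. -/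
noncomputable def c (n s g : ℕ) : ℝ :=
  ∑ p ∈ Finset.univ.filter
      (fun p : Equiv.Perm (Fin n) × Equiv.Perm (Fin n) =>
        (sharedSteps n p.1 p.2).card = s ∧ numGaps n p.1 p.2 = g),
    pairProb n p.1 p.2

/-- `w m`: the number of direct paths from `∅` to `[m]` in the `m`-dimensional hypercube
that are edge-disjoint from the canonical path (the identity permutation). -/
noncomputable def w (m : ℕ) : ℕ :=
  Nat.card {σ : Equiv.Perm (Fin m) // sharedSteps m σ 1 = ∅}

end RandomHypercube

/-!
Weights are exchangeable, so the probability that two paths sharing `s` edges are both accessible is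
the expected proportion of the `(2n - s)!` rearrangements of the weights on their union that are
increasing along both. The weight of a shared edge is forced, and the set of weights on the
unshared part of the first path determines the rest, so the probability is at most
`4 ^ (n - s) / (2n - s)!`.

The shared edges are the strong fixed points of `τ = σ⁻¹ σ'`. Since `τ` preserves each gap, and no
gap has size `1`, at most `n! ∏ kᵢ!` pairs have a given gap vector with nonzero entries `kᵢ ≥ 2`.
As `∑ (a + 2)! (b + 2)!` over `a + b = m` is at most `10 (m + 2)!`, each gap beyond the first costs
a factor `160 (s + 1) / n²`, and what remains is the single-gap term `4 ^ k / (n + k choose k)`.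
This is quasi-convex in `k`, hence bounded through its values at the ends of the range of `k` by
`32 / n² + 2n (7/8) ^ s`. Summing over `g ≥ 2` and `s` gives `O(1/n)`.
-/

namespace RandomHypercube

section TwoSequences

variable {ι κ R : Type*} [LinearOrder ι] [LinearOrder R]

/-- The weighting `w` is strictly increasing along both sequences `p` and `q`. For the edge
sequences of two direct paths this says that both paths are accessible. -/
def BothIncreasing (p q : ι → κ) (w : κ → R) : Prop :=
  StrictMono (w ∘ p) ∧ StrictMono (w ∘ q)

variable {p q : ι → κ}

lemma BothIncreasing.lt_iff {w : κ → R} (hw : BothIncreasing p q w)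
    (hcover : Set.range p ∪ Set.range q = Set.univ) {j : ι} (hj : p j = q j) (y : κ) :
    w y < w (p j) ↔ ∃ i < j, p i = y ∨ q i = y := by
  constructor
  · intro hlt
    rcases hcover.ge (Set.mem_univ y) with ⟨i, rfl⟩ | ⟨i, rfl⟩
    · exact ⟨i, hw.1.lt_iff_lt.1 hlt, Or.inl rfl⟩
    · exact ⟨i, hw.2.lt_iff_lt.1 (hlt.trans_eq (congrArg w hj)), Or.inr rfl⟩
  · rintro ⟨i, hij, rfl | rfl⟩
    · exact hw.1 hij
    · exact hj ▸ hw.2 hij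

lemma BothIncreasing.eq_of_apply_eq {w : κ → R} (hw : BothIncreasing p q w)
    (hcover : Set.range p ∪ Set.range q = Set.univ) {j : ι} (hj : p j = q j) {y : κ}
    (hy : w y = w (p j)) : y = p j := by
  rcases hcover.ge (Set.mem_univ y) with ⟨i, rfl⟩ | ⟨i, rfl⟩
  · exact congrArg p (hw.1.injective hy)
  · exact (congrArg q (hw.2.injective (hy.trans (congrArg w hj)))).trans hj.symm

-- The number of elements lighter than `p j` is the number of terms of index below `j`, whatever
-- the arrangement, so a common term always receives the weight of the same rank.
lemma BothIncreasing.perm_apply_eq [Finite κ] {w : κ → R} {τ τ' : Equiv.Perm κ}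
    (hτ : BothIncreasing p q (w ∘ τ)) (hτ' : BothIncreasing p q (w ∘ τ'))
    (hcover : Set.range p ∪ Set.range q = Set.univ) {j : ι} (hj : p j = q j) :
    τ (p j) = τ' (p j) := by
  wlog hle : w (τ (p j)) ≤ w (τ' (p j)) generalizing τ τ'
  · exact (this hτ' hτ (le_of_not_ge hle)).symm
  classical
  have := Fintype.ofFinite κ
  let lighter (ρ : Equiv.Perm κ) : Finset κ := {z | w z < w (ρ (p j))}
  let earlier : Finset κ := {y | ∃ i < j, p i = y ∨ q i = y}
  have card_lighter {ρ : Equiv.Perm κ} (hρ : BothIncreasing p q (w ∘ ρ)) :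
      (lighter ρ).card = earlier.card :=
    (Finset.card_equiv ρ fun y => by
      simpa [lighter, earlier] using (hρ.lt_iff hcover hj y).symm).symm
  have lighter_eq : lighter τ = lighter τ' :=
    Finset.eq_of_subset_of_card_le
      (Finset.monotone_filter_right _ fun _ _ hz => hz.trans_le hle)
      (card_lighter hτ' |>.trans (card_lighter hτ).symm).le
  have hnot : τ (p j) ∉ lighter τ' := lighter_eq ▸ by simp [lighter]
  have hweight : w (τ (p j)) = w (τ' (p j)) := hle.antisymm (by simpa [lighter] using hnot)
  have := hτ'.eq_of_apply_eq hcover hj (y := τ'.symm (τ (p j))) (by simpa using hweight)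
  exact τ'.symm_apply_eq.1 this

lemma eq_of_strictMono_comp_of_range_eq [WellFoundedLT ι] {w : κ → R} {f g : ι → κ}
    (hf : StrictMono (w ∘ f)) (hg : StrictMono (w ∘ g))
    (hfg : Set.range f = Set.range g) : f = g := by
  have hcomp : w ∘ f = w ∘ g := (hf.range_inj hg).1 (by simp only [Set.range_comp, hfg])
  funext i
  obtain ⟨k, hk⟩ := hfg.le (Set.mem_range_self i)
  have hik : k = i := hg.injective (by simpa [hk] using congrFun hcomp i)
  rw [← hk, hik]

omit [LinearOrder ι] in
lemma range_eq_compl_union_image (hlevel : ∀ i j, p i = q j → i = j)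
    (hcover : Set.range p ∪ Set.range q = Set.univ) :
    Set.range q = (Set.range p)ᶜ ∪ p '' {j | p j = q j} := by
  ext y
  constructor
  · rintro ⟨j, rfl⟩
    by_cases hj : p j = q j
    · exact Or.inr ⟨j, hj, hj⟩
    · refine Or.inl ?_
      rintro ⟨i, hi⟩
      exact hj (hlevel i j hi ▸ hi)
  · rintro (hy | ⟨j, hj, rfl⟩)
    · exact (hcover.ge (Set.mem_univ y)).resolve_left hy
    · exact ⟨j, hj.symm⟩

lemma BothIncreasing.perm_eq_of_image_range_eq [WellFoundedLT ι] {w : κ → R} {τ τ' : Equiv.Perm κ}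
    (hτ : BothIncreasing p q (w ∘ τ)) (hτ' : BothIncreasing p q (w ∘ τ'))
    (hlevel : ∀ i j, p i = q j → i = j) (hcover : Set.range p ∪ Set.range q = Set.univ)
    (himage : τ '' Set.range p = τ' '' Set.range p) : τ = τ' := by
  have hp : τ ∘ p = τ' ∘ p :=
    eq_of_strictMono_comp_of_range_eq hτ.1 hτ'.1 (by simpa only [Set.range_comp] using himage)
  have hshared : τ '' (p '' {j | p j = q j}) = τ' '' (p '' {j | p j = q j}) := by
    simp only [← Set.image_comp, hp]
  have hq : τ ∘ q = τ' ∘ q := by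
    refine eq_of_strictMono_comp_of_range_eq hτ.2 hτ'.2 ?_
    simp only [Set.range_comp, range_eq_compl_union_image hlevel hcover, Set.image_union,
      Set.image_compl_eq τ.bijective, Set.image_compl_eq τ'.bijective, himage, hshared]
  ext y
  rcases hcover.ge (Set.mem_univ y) with ⟨i, rfl⟩ | ⟨i, rfl⟩
  · exact congrFun hp i
  · exact congrFun hq i

open scoped Classical in
-- An arrangement is determined by the set of weights it puts on `p`, and this set contains the
-- weights of the common terms, which do not depend on the arrangement.
lemma card_perm_bothIncreasing_le [Fintype ι] [Fintype κ] (hlevel : ∀ i j, p i = q j → i = j)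
    (hcover : Set.range p ∪ Set.range q = Set.univ) (w : κ → R) :
    Finset.card {τ : Equiv.Perm κ | BothIncreasing p q (w ∘ τ)} ≤
      2 ^ (Fintype.card κ - Finset.card {j | p j = q j}) := by
  rcases Finset.eq_empty_or_nonempty {τ : Equiv.Perm κ | BothIncreasing p q (w ∘ τ)} with
    hempty | ⟨τ₀, hτ₀⟩
  · simp [hempty]
  rw [Finset.mem_filter_univ] at hτ₀
  set common : Finset κ := Finset.image (τ₀ ∘ p) {j | p j = q j}
  have card_common : common.card = Finset.card {j | p j = q j} :=
    Finset.card_image_of_injective _ (hτ₀.1.injective.of_comp (f := w))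
  rw [← card_common, ← Finset.card_univ, ← Finset.card_Icc_finset (Finset.subset_univ _)]
  refine Finset.card_le_card_of_injOn (fun τ => Finset.univ.image (τ ∘ p)) ?_ ?_
  · intro τ hτ
    simp only [Finset.coe_filter_univ, Set.mem_ofPred_eq] at hτ
    refine Finset.mem_coe.2 (Finset.mem_Icc.2 ⟨?_, Finset.subset_univ _⟩)
    refine Finset.image_subset_iff.2 fun j hj => ?_
    have hj' : p j = q j := by simpa using hj
    exact Finset.mem_image.2 ⟨j, Finset.mem_univ j, hτ.perm_apply_eq hτ₀ hcover hj'⟩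
  · intro τ hτ τ' hτ' himage
    simp only [Finset.coe_filter_univ, Set.mem_ofPred_eq] at hτ hτ'
    refine hτ.perm_eq_of_image_range_eq hτ' hlevel hcover ?_
    simpa [← Set.range_comp, Function.comp_def] using
      congrArg (fun s : Finset κ => (s : Set κ)) himage

end TwoSequences

section Exchangeability

lemma card_mul_measure_le {Ω G : Type*} [MeasurableSpace Ω] [Fintype G] {μ : Measure Ω}
    [IsProbabilityMeasure μ] {T : G → Ω → Ω} (hT : ∀ g, MeasurePreserving (T g) μ μ) {B : Set Ω}
    [DecidablePred (· ∈ B)] (hB : MeasurableSet B) {K : ℕ}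
    (hK : ∀ ω, Finset.card {g | T g ω ∈ B} ≤ K) :
    Fintype.card G * μ B ≤ K := by
  have indicator_preimage (g : G) (ω : Ω) : (T g ⁻¹' B).indicator (1 : Ω → ENNReal) ω =
      if T g ω ∈ B then 1 else 0 := by
    by_cases h : T g ω ∈ B <;> simp [h]
  calc Fintype.card G * μ B = ∑ g, μ (T g ⁻¹' B) := by
        simp [(hT _).measure_preimage hB.nullMeasurableSet]
    _ = ∑ g, ∫⁻ ω, (T g ⁻¹' B).indicator 1 ω ∂μ := by
        refine Finset.sum_congr rfl fun g _ => ?_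
        rw [lintegral_indicator_one ((hT g).measurable hB)]
    _ = ∫⁻ ω, ∑ g, (T g ⁻¹' B).indicator 1 ω ∂μ :=
        (lintegral_finsetSum _ fun g _ => measurable_one.indicator ((hT g).measurable hB)).symm
    _ = ∫⁻ ω, (Finset.card {g | T g ω ∈ B} : ENNReal) ∂μ := by
        simp only [indicator_preimage, Finset.sum_boole]
    _ ≤ ∫⁻ _, (K : ENNReal) ∂μ := lintegral_mono fun ω => Nat.cast_le.2 (hK ω)
    _ = K := by rw [lintegral_const, measure_univ, mul_one]

lemma measurePreserving_comp_perm {κ R : Type*} [Fintype κ] [MeasurableSpace R] (ν : Measure R)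
    [SigmaFinite ν] (τ : Equiv.Perm κ) :
    MeasurePreserving (fun w : κ → R => w ∘ τ) (Measure.pi fun _ => ν) (Measure.pi fun _ => ν) :=
  measurePreserving_arrowCongr' (fun _ => ν) (fun _ => ν) τ.symm (MeasurableEquiv.refl R)
    fun _ => MeasurePreserving.id ν

variable {ι κ R : Type*} [LinearOrder ι] [LinearOrder R] [TopologicalSpace R]
  [OrderClosedTopology R] [SecondCountableTopology R] [MeasurableSpace R] [OpensMeasurableSpace R]

lemma measurableSet_bothIncreasing [Countable ι] (p q : ι → κ) :
    MeasurableSet {w : κ → R | BothIncreasing p q w} := by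
  have measurableSet_strictMono (r : ι → κ) : MeasurableSet {w : κ → R | StrictMono (w ∘ r)} := by
    simp only [StrictMono, Set.ofPred_forall]
    exact .iInter fun i => .iInter fun j => .iInter fun _ =>
      measurableSet_lt (measurable_pi_apply (r i)) (measurable_pi_apply (r j))
  exact (measurableSet_strictMono p).inter (measurableSet_strictMono q)

variable [Fintype ι] [Fintype κ] [DecidableEq κ]

-- Average over the rearrangements of the weights on the union of the two sequences: i.i.d. weights
-- are exchangeable, and no weighting has too many rearrangements increasing along both.
lemma factorial_mul_measure_bothIncreasing_le (ν : Measure R) [IsProbabilityMeasure ν]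
    {p q : ι → κ} (hlevel : ∀ i j, p i = q j → i = j) :
    ((Finset.univ.image p ∪ Finset.univ.image q).card.factorial : ENNReal) *
        Measure.pi (fun _ => ν) {w : κ → R | BothIncreasing p q w} ≤
      ((2 ^ ((Finset.univ.image p ∪ Finset.univ.image q).card -
        Finset.card {j | p j = q j}) : ℕ) : ENNReal) := by
  classical
  set E := Finset.univ.image p ∪ Finset.univ.image q with hE
  let pE : ι → E := fun j => ⟨p j, by simp [hE]⟩
  let qE : ι → E := fun j => ⟨q j, by simp [hE]⟩
  have hlevelE (i j : ι) (h : pE i = qE j) : i = j := hlevel i j (congrArg Subtype.val h)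
  have hcoverE : Set.range pE ∪ Set.range qE = Set.univ := by
    refine Set.eq_univ_of_forall fun ⟨y, hy⟩ => ?_
    simpa [hE, pE, qE] using hy
  have shared_eq : Finset.card {j | pE j = qE j} = Finset.card {j | p j = q j} := by
    simp [pE, qE]
  have restrict_iff (w : κ → R) (τ : Equiv.Perm E) :
      BothIncreasing p q (w ∘ Equiv.Perm.ofSubtype τ) ↔
        BothIncreasing pE qE ((fun e : E => w e) ∘ τ) := by
    have extend_apply (e : E) : Equiv.Perm.ofSubtype τ e = (τ e : κ) :=
      Equiv.Perm.ofSubtype_apply_coe τ e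
    have hp : (w ∘ Equiv.Perm.ofSubtype τ) ∘ p = ((fun e : E => w e) ∘ τ) ∘ pE :=
      funext fun j => congrArg w (extend_apply (pE j))
    have hq : (w ∘ Equiv.Perm.ofSubtype τ) ∘ q = ((fun e : E => w e) ∘ τ) ∘ qE :=
      funext fun j => congrArg w (extend_apply (qE j))
    rw [BothIncreasing, BothIncreasing, hp, hq]
  rw [← Fintype.card_coe E, ← Fintype.card_perm, ← shared_eq]
  refine card_mul_measure_le
    (fun τ : Equiv.Perm E => measurePreserving_comp_perm ν (Equiv.Perm.ofSubtype τ))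
    (measurableSet_bothIncreasing p q) fun w => ?_
  simp only [Set.mem_ofPred_eq, restrict_iff]
  convert card_perm_bothIncreasing_le hlevelE hcoverE fun e : E => w e

end Exchangeability

section PairProbability

variable {n : ℕ}

lemma card_initSeg (σ : Equiv.Perm (Fin n)) (j : Fin n) : (initSeg n σ j).card = j := by
  rw [initSeg, Finset.card_image_of_injective _ σ.injective, Finset.filter_gt_eq_Iio, Fin.card_Iio]

lemma eq_of_pathEdge_eq {σ σ' : Equiv.Perm (Fin n)} {i j : Fin n}
    (h : pathEdge n σ i = pathEdge n σ' j) : i = j := by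
  have : (initSeg n σ i).card = (initSeg n σ' j).card := congrArg (fun e => e.1.card) h
  rwa [card_initSeg, card_initSeg, Fin.val_inj] at this

lemma pathEdge_injective (σ : Equiv.Perm (Fin n)) : Function.Injective (pathEdge n σ) :=
  fun _ _ => eq_of_pathEdge_eq

lemma card_sharedSteps_le (σ σ' : Equiv.Perm (Fin n)) : (sharedSteps n σ σ').card ≤ n :=
  (Finset.card_le_univ _).trans_eq (Fintype.card_fin n)

lemma card_pathEdge_union (σ σ' : Equiv.Perm (Fin n)) :
    (Finset.univ.image (pathEdge n σ) ∪ Finset.univ.image (pathEdge n σ')).card =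
      2 * n - (sharedSteps n σ σ').card := by
  have inter_eq : Finset.univ.image (pathEdge n σ) ∩ Finset.univ.image (pathEdge n σ') =
      (sharedSteps n σ σ').image (pathEdge n σ) := by
    ext e
    simp only [Finset.mem_inter, Finset.mem_image, Finset.mem_univ, true_and, sharedSteps,
      Finset.mem_filter]
    constructor
    · rintro ⟨⟨i, rfl⟩, j, hj⟩
      exact ⟨i, eq_of_pathEdge_eq hj ▸ hj.symm, rfl⟩
    · rintro ⟨j, hj, rfl⟩
      exact ⟨⟨j, rfl⟩, j, hj.symm⟩
  have := card_sharedSteps_le σ σ'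
  rw [Finset.card_union, inter_eq]
  simp only [Finset.card_image_of_injective _ (pathEdge_injective _), Finset.card_univ,
    Fintype.card_fin]
  omega

lemma pairProb_nonneg (σ σ' : Equiv.Perm (Fin n)) : 0 ≤ pairProb n σ σ' :=
  ENNReal.toReal_nonneg

lemma pairProb_le (σ σ' : Equiv.Perm (Fin n)) :
    pairProb n σ σ' ≤ 4 ^ (n - (sharedSteps n σ σ').card) /
      (2 * n - (sharedSteps n σ σ').card).factorial := by
  have : IsProbabilityMeasure ((volume : Measure ℝ).restrict (Set.Icc 0 1)) := ⟨by simp⟩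
  have hmeasure := factorial_mul_measure_bothIncreasing_le
    ((volume : Measure ℝ).restrict (Set.Icc 0 1)) (p := pathEdge n σ) (q := pathEdge n σ')
    fun _ _ => eq_of_pathEdge_eq
  have hreal := ENNReal.toReal_mono (ENNReal.natCast_ne_top _) hmeasure
  rw [ENNReal.toReal_mul, ENNReal.toReal_natCast, ENNReal.toReal_natCast,
    card_pathEdge_union] at hreal
  have hpow : (2 : ℝ) ^ (2 * n - (sharedSteps n σ σ').card - (sharedSteps n σ σ').card) =
      4 ^ (n - (sharedSteps n σ σ').card) := by
    rw [show 2 * n - (sharedSteps n σ σ').card - (sharedSteps n σ σ').card =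
      2 * (n - (sharedSteps n σ σ').card) by omega, pow_mul]
    norm_num
  rw [le_div_iff₀' (by positivity), ← hpow]
  exact_mod_cast hreal

end PairProbability

section GapSizes

variable {α : Type*} [LinearOrder α]

/-- The number of elements of `S` below `i`. -/
def countBelow (S : Finset α) (i : α) : ℕ :=
  Finset.card {j ∈ S | j < i}

lemma countBelow_mono (S : Finset α) : Monotone (countBelow S) := fun _ _ hij =>
  Finset.card_le_card (Finset.monotone_filter_right _ fun _ _ hk => hk.trans_le hij)

lemma countBelow_le_card (S : Finset α) (i : α) : countBelow S i ≤ S.card :=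
  Finset.card_filter_le _ _

lemma countBelow_lt_countBelow {S : Finset α} {i j : α} (hi : i ∈ S) (hij : i < j) :
    countBelow S i < countBelow S j := by
  refine Finset.card_lt_card (Finset.ssubset_iff_of_subset ?_ |>.2 ⟨i, ?_, ?_⟩)
  · exact Finset.monotone_filter_right _ fun _ _ hk => hk.trans hij
  · exact Finset.mem_filter.2 ⟨hi, hij⟩
  · simp

lemma strictMonoOn_countBelow (S : Finset α) : StrictMonoOn (countBelow S) S :=
  fun _ hi _ _ hij => countBelow_lt_countBelow hi hij

lemma countBelow_lt_card {S : Finset α} {i : α} (hi : i ∈ S) : countBelow S i < S.card :=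
  Finset.card_lt_card (Finset.filter_ssubset.2 ⟨i, hi, lt_irrefl i⟩)

lemma image_countBelow (S : Finset α) : S.image (countBelow S) = Finset.range S.card := by
  refine Finset.eq_of_subset_of_card_le ?_ ?_
  · exact Finset.image_subset_iff.2 fun i hi => Finset.mem_range.2 (countBelow_lt_card hi)
  · rw [Finset.card_range, Finset.card_image_of_injOn (strictMonoOn_countBelow S).injOn]

lemma map_countBelow_sort (S : Finset α) :
    (S.sort (· ≤ ·)).map (countBelow S) = List.range S.card := by
  refine List.SortedLT.eq_of_mem_iff ?_ (List.sortedLT_range _) fun t => ?_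
  · refine List.Pairwise.sortedLT (List.pairwise_map.2 ?_)
    refine S.sortedLT_sort.pairwise.imp_of_mem fun hi _ hij => ?_
    exact countBelow_lt_countBelow ((Finset.mem_sort _).1 hi) hij
  · simpa using congrArg (t ∈ ·) (image_countBelow S)

variable [Fintype α]

/-- The gap vector of a set `S` of levels: `gapSizes S t` is the number of elements outside `S`
that have exactly `t` elements of `S` below them. -/
noncomputable def gapSizes (S : Finset α) : ℕ →₀ ℕ :=
  Finsupp.onFinset (Finset.range (S.card + 1)) (fun t => Finset.card {i ∈ Sᶜ | countBelow S i = t})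
    fun t ht => by
      obtain ⟨i, hi⟩ := Finset.card_ne_zero.1 ht
      have hcount : countBelow S i = t := (Finset.mem_filter.1 hi).2
      exact Finset.mem_range_succ_iff.2 (hcount ▸ countBelow_le_card S i)

lemma gapSizes_apply (S : Finset α) (t : ℕ) :
    gapSizes S t = Finset.card {i ∈ Sᶜ | countBelow S i = t} := rfl

lemma support_gapSizes_subset (S : Finset α) :
    (gapSizes S).support ⊆ Finset.range (S.card + 1) :=
  Finsupp.support_onFinset_subset

lemma support_gapSizes (S : Finset α) : (gapSizes S).support = Sᶜ.image (countBelow S) := by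
  ext t
  simp only [Finsupp.mem_support_iff, gapSizes_apply, Finset.card_ne_zero,
    Finset.filter_nonempty_iff, Finset.mem_image]

lemma sum_support_gapSizes (S : Finset α) :
    ∑ t ∈ (gapSizes S).support, gapSizes S t = Sᶜ.card := by
  rw [support_gapSizes]
  exact (Finset.card_eq_sum_card_image (countBelow S) Sᶜ).symm

lemma sum_range_gapSizes (S : Finset α) (t : ℕ) :
    ∑ u ∈ Finset.range t, gapSizes S u = Finset.card {i ∈ Sᶜ | countBelow S i < t} := by
  rw [Finset.card_eq_sum_card_fiberwise (f := countBelow S) (t := Finset.range t)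
    fun i hi => by simpa using (Finset.mem_filter.1 hi).2]
  refine Finset.sum_congr rfl fun u hu => ?_
  rw [gapSizes_apply, Finset.filter_filter]
  refine congrArg Finset.card (Finset.filter_congr fun i _ => ?_)
  have := Finset.mem_range.1 hu
  omega

lemma card_add_sum_range_gapSizes (S : Finset α) :
    S.card + ∑ u ∈ Finset.range (S.card + 1), gapSizes S u = Fintype.card α := by
  rw [sum_range_gapSizes, Finset.filter_true_of_mem fun i _ =>
    Nat.lt_succ_of_le (countBelow_le_card S i), Finset.card_add_card_compl]

lemma card_filter_lt_eq {S : Finset α} {j : α} (hj : j ∈ S) :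
    Finset.card {i | i < j} =
      countBelow S j + ∑ u ∈ Finset.range (countBelow S j + 1), gapSizes S u := by
  have lt_iff {i : α} (hi : i ∈ Sᶜ) : i < j ↔ countBelow S i < countBelow S j + 1 := by
    refine ⟨fun hij => Nat.lt_succ_of_le (countBelow_mono S hij.le), fun h => ?_⟩
    by_contra hij
    have hji : j < i := (not_lt.1 hij).lt_of_ne (by rintro rfl; exact Finset.mem_compl.1 hi hj)
    exact absurd (countBelow_lt_countBelow hj hji) (by omega)
  rw [sum_range_gapSizes, ← Finset.filter_congr fun i hi => lt_iff hi, countBelow,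
    ← Finset.card_union_of_disjoint, ← Finset.filter_union, Finset.union_compl]
  exact Finset.disjoint_filter_filter disjoint_compl_right

end GapSizes

section GapVector

-- Both lists in the definition of `gapsOfList` are images of `List.range (s + 1)` here: the `t`-th
-- gap starts at level `t + ∑ u < t, v u` and has length `v t`.
lemma gapsOfList_eq_map_range (v : ℕ → ℕ) (s : ℕ) :
    gapsOfList (s + ∑ u ∈ Finset.range (s + 1), v u)
        ((List.range s).map fun t => t + ∑ u ∈ Finset.range (t + 1), v u) =
      (List.range (s + 1)).map v := by
  have starts_eq : (0 :: ((List.range s).map fun t => t + ∑ u ∈ Finset.range (t + 1), v u).map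
      (· + 1)) = (List.range (s + 1)).map fun t => t + ∑ u ∈ Finset.range t, v u := by
    simp only [List.range_succ_eq_map, List.map_cons, List.map_map, Function.comp_def,
      Finset.range_zero, Finset.sum_empty, add_zero, Nat.succ_eq_add_one, add_right_comm]
  have ends_eq : ((List.range s).map fun t => t + ∑ u ∈ Finset.range (t + 1), v u) ++
      [s + ∑ u ∈ Finset.range (s + 1), v u] =
        (List.range (s + 1)).map fun t => t + ∑ u ∈ Finset.range (t + 1), v u := by
    rw [List.range_succ, List.map_append, List.map_singleton]
  rw [gapsOfList, starts_eq, ends_eq, List.zipWith_map, List.zipWith_self]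
  refine List.map_congr_left fun t _ => ?_
  rw [Finset.sum_range_succ]
  omega

variable {n : ℕ}

lemma map_val_sort_eq (S : Finset (Fin n)) :
    (S.sort (· ≤ ·)).map Fin.val =
      (List.range S.card).map fun t => t + ∑ u ∈ Finset.range (t + 1), gapSizes S u := by
  rw [← map_countBelow_sort, List.map_map]
  refine List.map_congr_left fun j hj => ?_
  have := card_filter_lt_eq ((Finset.mem_sort _).1 hj)
  rwa [Finset.filter_gt_eq_Iio, Fin.card_Iio] at this

lemma gapSizes_injective : Function.Injective (gapSizes : Finset (Fin n) → ℕ →₀ ℕ) := by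
  intro S T hST
  have card_eq : S.card = T.card := by
    have hcompl : Sᶜ.card = Tᶜ.card := by
      rw [← sum_support_gapSizes, ← sum_support_gapSizes, hST]
    have hS := S.card_add_card_compl
    have hT := T.card_add_card_compl
    omega
  have map_val_eq : (S.sort (· ≤ ·)).map Fin.val = (T.sort (· ≤ ·)).map Fin.val := by
    rw [map_val_sort_eq, map_val_sort_eq, card_eq, hST]
  rw [← S.sort_toFinset (· ≤ ·), List.map_injective_iff.2 Fin.val_injective map_val_eq,
    T.sort_toFinset]

lemma gapVector_eq (σ σ' : Equiv.Perm (Fin n)) :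
    gapVector n σ σ' =
      (List.range ((sharedSteps n σ σ').card + 1)).map (gapSizes (sharedSteps n σ σ')) := by
  have := gapsOfList_eq_map_range (gapSizes (sharedSteps n σ σ')) (sharedSteps n σ σ').card
  rwa [card_add_sum_range_gapSizes, Fintype.card_fin, ← map_val_sort_eq] at this

lemma numGaps_eq (σ σ' : Equiv.Perm (Fin n)) :
    numGaps n σ σ' = (gapSizes (sharedSteps n σ σ')).support.card := by
  set S := sharedSteps n σ σ' with hS
  have support_eq : (gapSizes S).support =
      ((List.range (S.card + 1)).filter ((· != 0) ∘ gapSizes S)).toFinset := by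
    ext t
    have := @support_gapSizes_subset _ _ _ S t
    simpa using this
  rw [numGaps, gapVector_eq, ← hS, support_eq, List.filter_map, List.length_map,
    List.toFinset_card_of_nodup (List.nodup_range.filter _)]

end GapVector

section StrongFixedPoints

variable {α : Type*} [LinearOrder α] [Fintype α]

/-- The strong fixed points of a permutation `g`: the fixed points `j` such that `g` maps the
elements below `j` to elements below `j`. The edges shared by the direct paths of `σ` and `σ'`
are at the strong fixed points of `σ⁻¹ * σ'`. -/
def strongFixedPoints (g : Equiv.Perm α) : Finset α :=
  {j | g j = j ∧ ∀ i, g i < j ↔ i < j}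

lemma mem_strongFixedPoints {g : Equiv.Perm α} {j : α} :
    j ∈ strongFixedPoints g ↔ g j = j ∧ ∀ i, g i < j ↔ i < j :=
  Finset.mem_filter_univ j

lemma lt_apply_iff {g : Equiv.Perm α} {j : α} (hj : j ∈ strongFixedPoints g) (i : α) :
    j < g i ↔ j < i := by
  obtain ⟨hfix, hlt⟩ := mem_strongFixedPoints.1 hj
  have heq : g i = j ↔ i = j := by rw [← g.injective.eq_iff (a := i), hfix]
  rw [← not_le, ← not_le, le_iff_lt_or_eq, le_iff_lt_or_eq, hlt, heq]

lemma apply_mem_strongFixedPoints_iff {g : Equiv.Perm α} {i : α} :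
    g i ∈ strongFixedPoints g ↔ i ∈ strongFixedPoints g := by
  constructor
  · intro h
    rwa [← g.injective (mem_strongFixedPoints.1 h).1]
  · intro h
    rwa [(mem_strongFixedPoints.1 h).1]

lemma countBelow_strongFixedPoints_apply (g : Equiv.Perm α) (i : α) :
    countBelow (strongFixedPoints g) (g i) = countBelow (strongFixedPoints g) i :=
  congrArg Finset.card (Finset.filter_congr fun _ hj => lt_apply_iff hj i)

-- The only element of a gap of size `1` would itself be a strong fixed point.
lemma gapSizes_strongFixedPoints_ne_one (g : Equiv.Perm α) (t : ℕ) :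
    gapSizes (strongFixedPoints g) t ≠ 1 := by
  rw [gapSizes_apply]
  intro hone
  obtain ⟨i₀, hi₀⟩ := Finset.card_eq_one.1 hone
  have mem_gap_iff (i : α) : i ∉ strongFixedPoints g ∧ countBelow (strongFixedPoints g) i = t ↔
      i = i₀ := by
    rw [← Finset.mem_singleton (a := i₀), ← hi₀, Finset.mem_filter, Finset.mem_compl]
  obtain ⟨hnot, rfl⟩ := (mem_gap_iff i₀).2 rfl
  have lt_iff (i : α) : i < i₀ ↔
      countBelow (strongFixedPoints g) i < countBelow (strongFixedPoints g) i₀ := by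
    refine ⟨fun hlt => ?_, fun h => (countBelow_mono _).reflect_lt h⟩
    by_cases hi : i ∈ strongFixedPoints g
    · exact countBelow_lt_countBelow hi hlt
    · exact (countBelow_mono _ hlt.le).lt_of_ne fun h => hlt.ne ((mem_gap_iff i).1 ⟨hi, h⟩)
  refine hnot (mem_strongFixedPoints.2 ⟨(mem_gap_iff _).1 ⟨?_, ?_⟩, fun i => ?_⟩)
  · rwa [apply_mem_strongFixedPoints_iff]
  · rw [countBelow_strongFixedPoints_apply]
  · rw [lt_iff, lt_iff, countBelow_strongFixedPoints_apply]

/-- The gap containing `i`, numbered as in `gapSizes S`, or `i` itself when `i ∈ S`. -/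
def blockOf (S : Finset α) (i : α) : α ⊕ ℕ :=
  if i ∈ S then Sum.inl i else Sum.inr (countBelow S i)

omit [Fintype α] in
lemma blockOf_eq_inl_iff {S : Finset α} {i j : α} :
    blockOf S i = Sum.inl j ↔ i = j ∧ j ∈ S := by
  unfold blockOf
  split_ifs with hi
  · rw [Sum.inl.injEq, iff_self_and]
    exact fun h => h ▸ hi
  · simpa using fun h : i = j => h ▸ hi

omit [Fintype α] in
lemma blockOf_eq_inr_iff {S : Finset α} {i : α} {t : ℕ} :
    blockOf S i = Sum.inr t ↔ i ∉ S ∧ countBelow S i = t := by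
  unfold blockOf
  split_ifs with hi <;> simp [hi]

lemma blockOf_strongFixedPoints_comp (g : Equiv.Perm α) :
    blockOf (strongFixedPoints g) ∘ g = blockOf (strongFixedPoints g) := by
  funext i
  simp only [Function.comp_apply, blockOf, apply_mem_strongFixedPoints_iff,
    countBelow_strongFixedPoints_apply]
  split_ifs with hi
  · rw [(mem_strongFixedPoints.1 hi).1]
  · rfl

lemma image_blockOf (S : Finset α) :
    Finset.univ.image (blockOf S) = S.disjSum (gapSizes S).support := by
  rw [support_gapSizes]
  ext (i | t)
  · simp [blockOf_eq_inl_iff]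
  · simp [blockOf_eq_inr_iff]

lemma card_strongFixedPoints_eq_le (S : Finset α) :
    Finset.card {g : Equiv.Perm α | strongFixedPoints g = S} ≤
      (gapSizes S).prod fun _ k => k.factorial := by
  classical
  have card_gap (t : ℕ) : Fintype.card {i // blockOf S i = Sum.inr t} = gapSizes S t := by
    rw [Fintype.card_subtype, gapSizes_apply]
    refine congrArg Finset.card (Finset.ext fun i => ?_)
    rw [Finset.mem_filter_univ, Finset.mem_filter, Finset.mem_compl, blockOf_eq_inr_iff]
  have card_level {j : α} (hj : j ∈ S) : Fintype.card {i // blockOf S i = Sum.inl j} = 1 := by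
    simp only [blockOf_eq_inl_iff, hj, and_true, Fintype.card_subtype_eq]
  calc Finset.card {g : Equiv.Perm α | strongFixedPoints g = S}
      ≤ Finset.card {g : Equiv.Perm α | blockOf S ∘ g = blockOf S} :=
        Finset.card_le_card (Finset.monotone_filter_right _ fun g _ hg =>
          hg ▸ blockOf_strongFixedPoints_comp g)
    _ = ∏ b ∈ S.disjSum (gapSizes S).support,
          (Fintype.card {i // blockOf S i = b}).factorial := by
        rw [← Fintype.card_subtype, DomMulAct.stabilizer_card', image_blockOf]
    _ = (gapSizes S).prod fun _ k => k.factorial := by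
        rw [Finset.prod_disjSum, Finset.prod_eq_one fun j hj => by rw [card_level hj]; rfl,
          one_mul]
        exact Finset.prod_congr rfl fun t _ => by rw [card_gap]

end StrongFixedPoints

lemma sharedSteps_eq_strongFixedPoints {n : ℕ} (σ σ' : Equiv.Perm (Fin n)) :
    sharedSteps n σ σ' = strongFixedPoints (σ⁻¹ * σ') := by
  ext j
  have step_iff : σ j = σ' j ↔ (σ⁻¹ * σ') j = j := by
    rw [Equiv.Perm.mul_apply, Equiv.Perm.inv_eq_iff_eq, eq_comm]
  have vertex_iff : initSeg n σ j = initSeg n σ' j ↔ ∀ i, (σ⁻¹ * σ') i < j ↔ i < j := by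
    have mem_initSeg (ρ : Equiv.Perm (Fin n)) (x : Fin n) : x ∈ initSeg n ρ j ↔ ρ⁻¹ x < j := by
      simp [initSeg, ← Equiv.eq_symm_apply]
    simp only [Finset.ext_iff, mem_initSeg, Equiv.Perm.mul_apply]
    refine ⟨fun h i => by simpa using h (σ' i), fun h x => by simpa using h (σ'⁻¹ x)⟩
  rw [sharedSteps, Finset.mem_filter_univ, mem_strongFixedPoints, pathEdge, pathEdge,
    Prod.mk.injEq, step_iff, vertex_iff, and_comm]

section GapSeries

open Finset.HasAntidiagonal (antidiagonal)

lemma factorial_mul_factorial_le (a b : ℕ) :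
    (a + 3).factorial * (b + 3).factorial ≤ 6 * (a + b + 3).factorial := by
  induction a with
  | zero => simp [Nat.factorial]
  | succ a ih =>
    calc (a + 1 + 3).factorial * (b + 3).factorial
        = (a + 4) * ((a + 3).factorial * (b + 3).factorial) := by
          rw [show a + 1 + 3 = a + 3 + 1 by ring, Nat.factorial_succ, mul_assoc]
      _ ≤ (a + b + 4) * (6 * (a + b + 3).factorial) := Nat.mul_le_mul (by omega) ih
      _ = 6 * (a + 1 + b + 3).factorial := by
          rw [show a + 1 + b + 3 = a + b + 3 + 1 by ring, Nat.factorial_succ (a + b + 3)]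
          ring

-- The two extreme terms are `2 * (m + 2)!` and the other `m - 1` are at most `6 * (m + 1)!`.
lemma sum_antidiagonal_factorial_le (m : ℕ) :
    ∑ p ∈ antidiagonal m, (p.1 + 2).factorial * (p.2 + 2).factorial ≤
      10 * (m + 2).factorial := by
  match m with
  | 0 => decide
  | 1 => decide
  | m + 2 =>
    have split_ends : ∑ p ∈ antidiagonal (m + 2), (p.1 + 2).factorial * (p.2 + 2).factorial =
        4 * (m + 4).factorial +
          ∑ p ∈ antidiagonal m, (p.1 + 3).factorial * (p.2 + 3).factorial := by
      rw [Finset.Nat.sum_antidiagonal_succ, Finset.Nat.sum_antidiagonal_succ']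
      simp only [zero_add, Nat.factorial_two]
      ring
    have middle_le : ∑ p ∈ antidiagonal m, (p.1 + 3).factorial * (p.2 + 3).factorial ≤
        (m + 1) * (6 * (m + 3).factorial) := by
      rw [← Finset.Nat.card_antidiagonal m, ← smul_eq_mul]
      refine Finset.sum_le_card_nsmul _ _ _ fun p hp => ?_
      exact Finset.HasAntidiagonal.mem_antidiagonal.1 hp ▸ factorial_mul_factorial_le p.1 p.2
    have : (m + 4).factorial = (m + 4) * (m + 3).factorial := Nat.factorial_succ _
    rw [split_ends]
    nlinarith

lemma coeff_mk_factorial_pow_le (g m : ℕ) :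
    PowerSeries.coeff m ((.mk fun k => (k + 2).factorial : PowerSeries ℕ) ^ (g + 1)) ≤
      10 ^ g * (m + 2).factorial := by
  induction g generalizing m with
  | zero => simp
  | succ g ih =>
    calc PowerSeries.coeff m ((.mk fun k => (k + 2).factorial : PowerSeries ℕ) ^ (g + 2))
        = ∑ p ∈ antidiagonal m,
            PowerSeries.coeff p.1 ((.mk fun k => (k + 2).factorial : PowerSeries ℕ) ^ (g + 1)) *
              (p.2 + 2).factorial := by
          simp only [pow_succ _ (g + 1), PowerSeries.coeff_mul, PowerSeries.coeff_mk]
      _ ≤ ∑ p ∈ antidiagonal m,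
            10 ^ g * (p.1 + 2).factorial * (p.2 + 2).factorial :=
          Finset.sum_le_sum fun p _ => Nat.mul_le_mul_right _ (ih p.1)
      _ ≤ 10 ^ g * (10 * (m + 2).factorial) := by
          simp only [mul_assoc, ← Finset.mul_sum]
          exact Nat.mul_le_mul_left _ (sum_antidiagonal_factorial_le m)
      _ = 10 ^ (g + 1) * (m + 2).factorial := by ring

/-- The generating series `∑ k! X ^ k`, over `k ≥ 2`, bounding the number of ways to rearrange a
path along one gap of size `k`. -/
noncomputable def gapSeries : PowerSeries ℕ :=
  PowerSeries.X ^ 2 * PowerSeries.mk fun k => (k + 2).factorial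

lemma coeff_gapSeries {k : ℕ} (hk : 2 ≤ k) : PowerSeries.coeff k gapSeries = k.factorial := by
  rw [gapSeries, PowerSeries.coeff_X_pow_mul', if_pos hk, PowerSeries.coeff_mk,
    Nat.sub_add_cancel hk]

lemma coeff_gapSeries_pow_le (g m : ℕ) :
    PowerSeries.coeff (m + 2 * (g + 1)) (gapSeries ^ (g + 1)) ≤ 10 ^ g * (m + 2).factorial := by
  rw [gapSeries, mul_pow, ← pow_mul, PowerSeries.coeff_X_pow_mul]
  exact coeff_mk_factorial_pow_le g m

end GapSeries

section Counting

variable {n : ℕ}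

lemma card_gapSizes_eq_le (v : ℕ →₀ ℕ) :
    Finset.card {g : Equiv.Perm (Fin n) | gapSizes (strongFixedPoints g) = v} ≤
      ∏ t ∈ v.support, PowerSeries.coeff (v t) gapSeries := by
  rcases Finset.eq_empty_or_nonempty
    {g : Equiv.Perm (Fin n) | gapSizes (strongFixedPoints g) = v} with hempty | ⟨g₀, hg₀⟩
  · simp [hempty]
  rw [Finset.mem_filter_univ] at hg₀
  subst hg₀
  calc Finset.card {g | gapSizes (strongFixedPoints g) = gapSizes (strongFixedPoints g₀)}
      = Finset.card {g | strongFixedPoints g = strongFixedPoints g₀} := by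
        simp only [gapSizes_injective.eq_iff]
    _ ≤ ∏ t ∈ (gapSizes (strongFixedPoints g₀)).support,
          (gapSizes (strongFixedPoints g₀) t).factorial := card_strongFixedPoints_eq_le _
    _ = ∏ t ∈ (gapSizes (strongFixedPoints g₀)).support,
          PowerSeries.coeff (gapSizes (strongFixedPoints g₀) t) gapSeries := by
        refine Finset.prod_congr rfl fun t ht => (coeff_gapSeries ?_).symm
        have := gapSizes_strongFixedPoints_ne_one g₀ t
        have := Finsupp.mem_support_iff.1 ht
        omega

lemma card_support_gapSizes_eq_le (s : ℕ) (U : Finset ℕ) :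
    Finset.card {g : Equiv.Perm (Fin n) | (strongFixedPoints g).card = s ∧
      (gapSizes (strongFixedPoints g)).support = U} ≤
        PowerSeries.coeff (n - s) (gapSeries ^ U.card) := by
  have maps_to : Set.MapsTo (fun g : Equiv.Perm (Fin n) => gapSizes (strongFixedPoints g))
      ({g | (strongFixedPoints g).card = s ∧ (gapSizes (strongFixedPoints g)).support = U} :
        Finset (Equiv.Perm (Fin n))) (U.finsuppAntidiag (n - s)) := by
    intro g hg
    obtain ⟨rfl, rfl⟩ := (Finset.mem_filter_univ g).1 hg
    refine Finset.mem_coe.2 (Finset.mem_finsuppAntidiag.2 ⟨?_, subset_rfl⟩)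
    rw [sum_support_gapSizes, Finset.card_compl, Fintype.card_fin]
  rw [Finset.card_eq_sum_card_fiberwise maps_to, ← Finset.prod_const, PowerSeries.coeff_prod]
  refine Finset.sum_le_sum fun v hv => ?_
  rcases eq_or_ne v.support U with rfl | hvU
  · refine le_trans (Finset.card_le_card fun g hg => ?_) (card_gapSizes_eq_le v)
    exact (Finset.mem_filter_univ g).2 (Finset.mem_filter.1 hg).2
  · rw [Finset.card_eq_zero.2 (Finset.filter_eq_empty_iff.2 ?_)]
    · exact Nat.zero_le _
    · rintro g hg rfl
      exact hvU ((Finset.mem_filter_univ g).1 hg).2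

lemma card_gaps_eq_le (s g : ℕ) :
    Finset.card {τ : Equiv.Perm (Fin n) | (strongFixedPoints τ).card = s ∧
      (gapSizes (strongFixedPoints τ)).support.card = g} ≤
        (s + 1).choose g * PowerSeries.coeff (n - s) (gapSeries ^ g) := by
  have maps_to : Set.MapsTo
      (fun τ : Equiv.Perm (Fin n) => (gapSizes (strongFixedPoints τ)).support)
      ({τ | (strongFixedPoints τ).card = s ∧ (gapSizes (strongFixedPoints τ)).support.card = g} :
        Finset (Equiv.Perm (Fin n))) (Finset.powersetCard g (Finset.range (s + 1))) := by
    intro τ hτ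
    obtain ⟨rfl, rfl⟩ := (Finset.mem_filter_univ τ).1 hτ
    exact Finset.mem_coe.2 (Finset.mem_powersetCard.2 ⟨support_gapSizes_subset _, rfl⟩)
  rw [Finset.card_eq_sum_card_fiberwise maps_to, ← Finset.card_range (s + 1),
    ← Finset.card_powersetCard, ← smul_eq_mul, Finset.card_range]
  refine Finset.sum_le_card_nsmul _ _ _ fun U hU => ?_
  rw [← (Finset.mem_powersetCard.1 hU).2]
  refine le_trans (Finset.card_le_card fun τ hτ => ?_) (card_support_gapSizes_eq_le s U)
  obtain ⟨hτ, hU⟩ := Finset.mem_filter.1 hτ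
  exact (Finset.mem_filter_univ τ).2 ⟨((Finset.mem_filter_univ τ).1 hτ).1, hU⟩

lemma card_pairs_eq (s g : ℕ) :
    Finset.card {p : Equiv.Perm (Fin n) × Equiv.Perm (Fin n) |
      (sharedSteps n p.1 p.2).card = s ∧ numGaps n p.1 p.2 = g} =
    n.factorial * Finset.card {τ : Equiv.Perm (Fin n) | (strongFixedPoints τ).card = s ∧
      (gapSizes (strongFixedPoints τ)).support.card = g} := by
  have card_perm : n.factorial = (Finset.univ : Finset (Equiv.Perm (Fin n))).card := by
    rw [Finset.card_univ, Fintype.card_perm, Fintype.card_fin]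
  rw [card_perm, ← Finset.card_product]
  refine Finset.card_equiv
    (Equiv.prodShear (Equiv.refl _) fun σ => Equiv.mulLeft σ⁻¹) fun p => ?_
  simp [numGaps_eq, sharedSteps_eq_strongFixedPoints]

lemma c_nonneg (n s g : ℕ) : 0 ≤ c n s g :=
  Finset.sum_nonneg fun _ _ => pairProb_nonneg _ _

lemma c_le_coeff_gapSeries (n s g : ℕ) :
    c n s g ≤ n.factorial * ((s + 1).choose g * PowerSeries.coeff (n - s) (gapSeries ^ g) : ℕ) *
      (4 ^ (n - s) / (2 * n - s).factorial) := by
  calc c n s g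
      ≤ (Finset.card {p : Equiv.Perm (Fin n) × Equiv.Perm (Fin n) |
          (sharedSteps n p.1 p.2).card = s ∧ numGaps n p.1 p.2 = g} : ℝ) *
            (4 ^ (n - s) / (2 * n - s).factorial) := by
        rw [c, ← nsmul_eq_mul]
        refine Finset.sum_le_card_nsmul _ _ _ fun p hp => ?_
        rw [Finset.mem_filter_univ] at hp
        exact hp.1 ▸ pairProb_le p.1 p.2
    _ ≤ _ := by
        rw [card_pairs_eq]
        gcongr
        exact_mod_cast Nat.mul_le_mul_left _ (card_gaps_eq_le s g)

end Counting

section GapWeight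

/-- The factor `4 ^ k / (n + k choose k)` that bounds the contribution of a single gap of size `k`
in dimension `n`. -/
noncomputable def gapWeight (n k : ℕ) : ℝ :=
  4 ^ k / (n + k).choose k

lemma gapWeight_nonneg (n k : ℕ) : 0 ≤ gapWeight n k := by
  unfold gapWeight
  positivity

lemma gapWeight_succ (n k : ℕ) :
    gapWeight n (k + 1) = gapWeight n k * (4 * (k + 1) / (n + k + 1)) := by
  have hchoose : ((n + k + 1 : ℕ) : ℝ) * (n + k).choose k =
      (n + k + 1).choose (k + 1) * ((k + 1 : ℕ) : ℝ) := mod_cast Nat.add_one_mul_choose_eq (n + k) k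
  have hpos : (0 : ℝ) < (n + k).choose k := mod_cast Nat.choose_pos (Nat.le_add_left k n)
  have hpos' : (0 : ℝ) < (n + k + 1).choose (k + 1) :=
    mod_cast Nat.choose_pos (Nat.succ_le_succ (Nat.le_add_left k n))
  push_cast at hchoose
  rw [gapWeight, gapWeight, ← add_assoc]
  field_simp
  linear_combination 4 ^ (k + 1) * hchoose

lemma gapWeight_succ_le {n k : ℕ} (h : 3 * (k + 1) ≤ n) :
    gapWeight n (k + 1) ≤ gapWeight n k := by
  rw [gapWeight_succ]
  refine mul_le_of_le_one_right (gapWeight_nonneg n k) (div_le_one_of_le₀ ?_ (by positivity))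
  have : (3 * (k + 1) : ℝ) ≤ n := mod_cast h
  linarith

lemma gapWeight_le_succ {n k : ℕ} (h : n ≤ 3 * (k + 1)) :
    gapWeight n k ≤ gapWeight n (k + 1) := by
  rw [gapWeight_succ]
  refine le_mul_of_one_le_right (gapWeight_nonneg n k) ((one_le_div (by positivity)).2 ?_)
  have : (n : ℝ) ≤ 3 * (k + 1) := mod_cast h
  linarith

lemma gapWeight_le_max {n a k b : ℕ} (hak : a ≤ k) (hkb : k ≤ b) :
    gapWeight n k ≤ max (gapWeight n a) (gapWeight n b) := by
  rcases le_total (3 * k) n with hk | hk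
  · refine le_max_of_le_left ?_
    induction k, hak using Nat.le_induction with
    | base => exact le_rfl
    | succ k _ ih => exact (gapWeight_succ_le hk).trans (ih (by omega) (by omega))
  · refine le_max_of_le_right ?_
    induction b, hkb using Nat.le_induction with
    | base => exact le_rfl
    | succ b hkb ih => exact ih.trans (gapWeight_le_succ (by omega))

lemma gapWeight_two_le {n : ℕ} (hn : 0 < n) : gapWeight n 2 ≤ 32 / n ^ 2 := by
  have : (0 : ℝ) < n := mod_cast hn
  rw [gapWeight, Nat.cast_choose_two, div_le_div_iff₀ (by push_cast; nlinarith) (by positivity)]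
  push_cast
  nlinarith

lemma gapWeight_self_le {n : ℕ} (hn : 0 < n) : gapWeight n n ≤ 2 * n := by
  have hpos : (0 : ℝ) < n.centralBinom := mod_cast n.centralBinom_pos
  rw [gapWeight, ← two_mul, ← Nat.centralBinom_eq_two_mul_choose, div_le_iff₀ hpos]
  exact_mod_cast Nat.four_pow_le_two_mul_self_mul_centralBinom n hn

lemma gapWeight_sub_le {n d : ℕ} (hn : 0 < n) (hd : 2 * d ≤ n) :
    gapWeight n (n - d) ≤ 2 * n * (3 / 4) ^ d := by
  induction d with
  | zero => simpa using gapWeight_self_le hn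
  | succ d ih =>
    obtain ⟨k, hk⟩ : ∃ k, n - d = k + 1 := ⟨n - d - 1, by omega⟩
    have ratio_ge : (4 / 3 : ℝ) ≤ 4 * (k + 1) / (n + k + 1) := by
      have : (n : ℝ) ≤ 2 * (k + 1) := mod_cast (by omega : n ≤ 2 * (k + 1))
      rw [div_le_div_iff₀ (by norm_num) (by positivity)]
      linarith
    have step : gapWeight n k * (4 / 3) ≤ gapWeight n (k + 1) := by
      rw [gapWeight_succ]
      exact mul_le_mul_of_nonneg_left ratio_ge (gapWeight_nonneg n k)
    have := ih (by omega)
    rw [hk] at this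
    rw [show n - (d + 1) = k by omega, pow_succ]
    linarith

lemma gapWeight_le {n s k : ℕ} (hk : 2 ≤ k) (hks : k + s ≤ n) :
    gapWeight n k ≤ 32 / n ^ 2 + 2 * n * (7 / 8) ^ s := by
  have geometric_le : (3 / 4 : ℝ) ^ ((s + 1) / 2) ≤ (7 / 8) ^ s := calc
    (3 / 4 : ℝ) ^ ((s + 1) / 2) ≤ ((7 / 8) ^ 2) ^ ((s + 1) / 2) := by gcongr; norm_num
    _ ≤ (7 / 8) ^ s := by
      rw [← pow_mul]
      exact pow_le_pow_of_le_one (by norm_num) (by norm_num) (by omega)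
  calc gapWeight n k
      ≤ max (gapWeight n 2) (gapWeight n (n - (s + 1) / 2)) :=
        gapWeight_le_max hk (by omega)
    _ ≤ gapWeight n 2 + gapWeight n (n - (s + 1) / 2) :=
        max_le_add_of_nonneg (gapWeight_nonneg _ _) (gapWeight_nonneg _ _)
    _ ≤ 32 / n ^ 2 + 2 * n * (7 / 8) ^ s := by
        gcongr
        · exact gapWeight_two_le (by omega)
        · refine (gapWeight_sub_le (by omega) (by omega)).trans ?_
          gcongr

end GapWeight

section PairSum

lemma factorial_mul_factorial_div_le {n : ℕ} (hn : 0 < n) (k g : ℕ) :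
    (n.factorial * k.factorial / (n + k + 2 * g).factorial : ℝ) ≤
      1 / (n ^ (2 * g) * (n + k).choose k) := by
  have choose_pos : 0 < (n + k).choose k := Nat.choose_pos (Nat.le_add_left k n)
  rw [div_le_div_iff₀ (by positivity) (by positivity), one_mul]
  exact_mod_cast calc
    n.factorial * k.factorial * (n ^ (2 * g) * (n + k).choose k)
      = (n + k).factorial * n ^ (2 * g) := by
        rw [← Nat.add_choose_mul_factorial_mul_factorial n k]
        ring
    _ ≤ (n + k).factorial * (n + k + 1) ^ (2 * g) := by
        gcongr
        omega
    _ ≤ (n + k + 2 * g).factorial := Nat.factorial_mul_pow_le_factorial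

lemma c_le {n s g k : ℕ} (hk : 2 ≤ k) (hn : s + 2 * g + k = n) :
    c n s (g + 1) ≤ (s + 1) * (160 * (s + 1) / n ^ 2) ^ g * gapWeight n k := by
  have n_pos : 0 < n := by omega
  obtain ⟨m, rfl⟩ := Nat.exists_eq_add_of_le' hk
  have count_le : (s + 1).choose (g + 1) * PowerSeries.coeff (n - s) (gapSeries ^ (g + 1)) ≤
      (s + 1) ^ (g + 1) * (10 ^ g * (m + 2).factorial) := by
    rw [show n - s = m + 2 * (g + 1) by omega]
    exact Nat.mul_le_mul (Nat.choose_le_pow _ _) (coeff_gapSeries_pow_le g m)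
  calc c n s (g + 1)
      ≤ n.factorial * ((s + 1) ^ (g + 1) * (10 ^ g * (m + 2).factorial)) *
          (4 ^ (n - s) / (2 * n - s).factorial) := by
        refine (c_le_coeff_gapSeries n s (g + 1)).trans ?_
        gcongr
        exact_mod_cast count_le
    _ = (s + 1) ^ (g + 1) * 160 ^ g * 4 ^ (m + 2) *
          (n.factorial * (m + 2).factorial / (n + (m + 2) + 2 * g).factorial) := by
        rw [show n - s = 2 * g + (m + 2) by omega, show 2 * n - s = n + (m + 2) + 2 * g by omega,
          pow_add 4, pow_mul 4, show (160 : ℝ) = 10 * 4 ^ 2 by norm_num, mul_pow]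
        ring
    _ ≤ (s + 1) ^ (g + 1) * 160 ^ g * 4 ^ (m + 2) *
          (1 / (n ^ (2 * g) * (n + (m + 2)).choose (m + 2))) := by
        exact mul_le_mul_of_nonneg_left (factorial_mul_factorial_div_le n_pos _ _) (by positivity)
    _ = (s + 1) * (160 * (s + 1) / n ^ 2) ^ g * gapWeight n (m + 2) := by
        rw [gapWeight, div_pow, mul_pow, pow_mul]
        ring

lemma geom_sum_Ico_one_le {x : ℝ} (hx : 0 ≤ x) (hx' : x ≤ 1 / 2) (M : ℕ) :
    ∑ g ∈ Finset.Ico 1 M, x ^ g ≤ 2 * x :=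
  calc ∑ g ∈ Finset.Ico 1 M, x ^ g ≤ x ^ 1 / (1 - x) :=
        geom_sum_Ico_le_of_lt_one hx (by linarith)
    _ ≤ 2 * x := by
        rw [div_le_iff₀ (by linarith)]
        nlinarith

lemma sum_c_two_or_more_gaps_le {n s M : ℕ} (hsn : s < n) (hn : 320 ≤ n)
    (hM : s + 2 * M ≤ n) :
    ∑ g ∈ Finset.Icc 2 M, c n s g ≤ 10240 / n ^ 2 + 640 / n * ((s + 1) ^ 2 * (7 / 8) ^ s) := by
  have hsn' : (s + 1 : ℝ) ≤ n := mod_cast hsn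
  have hn' : (320 : ℝ) ≤ n := mod_cast hn
  have : (0 : ℝ) < n := by linarith
  set x : ℝ := 160 * (s + 1) / n ^ 2 with hx
  have x_le : x ≤ 1 / 2 := by
    rw [div_le_div_iff₀ (by positivity) (by norm_num)]
    nlinarith
  calc ∑ g ∈ Finset.Icc 2 M, c n s g
      = ∑ g ∈ Finset.Ico 1 M, c n s (g + 1) := by
        rw [Finset.sum_Ico_add' (c n s) 1 M 1, Finset.Ico_add_one_right_eq_Icc]
    _ ≤ ∑ g ∈ Finset.Ico 1 M, (s + 1) * x ^ g * (32 / n ^ 2 + 2 * n * (7 / 8) ^ s) := by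
        refine Finset.sum_le_sum fun g hg => ?_
        have := Finset.mem_Ico.1 hg
        refine (c_le (k := n - s - 2 * g) (by omega) (by omega)).trans ?_
        gcongr
        exact gapWeight_le (by omega) (by omega)
    _ = (s + 1) * (∑ g ∈ Finset.Ico 1 M, x ^ g) * (32 / n ^ 2 + 2 * n * (7 / 8) ^ s) := by
        rw [← Finset.sum_mul, ← Finset.mul_sum]
    _ ≤ (s + 1) * (2 * x) * (32 / n ^ 2 + 2 * n * (7 / 8) ^ s) := by
        gcongr
        exact geom_sum_Ico_one_le (by positivity) x_le M
    _ = 10240 * (s + 1) ^ 2 / n ^ 4 + 640 / n * ((s + 1) ^ 2 * (7 / 8) ^ s) := by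
        rw [hx]
        field_simp
        ring
    _ ≤ 10240 * n ^ 2 / n ^ 4 + 640 / n * ((s + 1) ^ 2 * (7 / 8) ^ s) := by gcongr
    _ = 10240 / n ^ 2 + 640 / n * ((s + 1) ^ 2 * (7 / 8) ^ s) := by field_simp

lemma summable_sq_mul_geometric :
    Summable fun s : ℕ => ((s : ℝ) + 1) ^ 2 * (7 / 8) ^ s := by
  have hsum := (summable_nat_add_iff 1).2
    (summable_pow_mul_geometric_of_norm_lt_one (R := ℝ) (r := 7 / 8) 2 (by norm_num))
  refine (hsum.mul_right (8 / 7)).congr fun s => ?_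
  push_cast
  ring

lemma sum_sum_c_two_or_more_gaps_le {n : ℕ} (hn : 320 ≤ n) :
    ∑ s ∈ Finset.Icc 1 (n - 2), ∑ g ∈ Finset.Icc 2 (min (s + 1) ((n - s) / 2)), c n s g ≤
      (10240 + 640 * ∑' s : ℕ, ((s : ℝ) + 1) ^ 2 * (7 / 8) ^ s) / n := by
  calc ∑ s ∈ Finset.Icc 1 (n - 2), ∑ g ∈ Finset.Icc 2 (min (s + 1) ((n - s) / 2)), c n s g
      ≤ ∑ s ∈ Finset.Icc 1 (n - 2),
          (10240 / n ^ 2 + 640 / n * ((s + 1 : ℝ) ^ 2 * (7 / 8) ^ s)) := by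
        refine Finset.sum_le_sum fun s hs => ?_
        have := Finset.mem_Icc.1 hs
        exact sum_c_two_or_more_gaps_le (by omega) hn (by omega)
    _ = (n - 2 : ℕ) * (10240 / n ^ 2) +
          640 / n * ∑ s ∈ Finset.Icc 1 (n - 2), (s + 1 : ℝ) ^ 2 * (7 / 8) ^ s := by
        rw [Finset.sum_add_distrib, Finset.sum_const, Nat.card_Icc, Nat.add_sub_cancel,
          nsmul_eq_mul, Finset.mul_sum]
    _ ≤ n * (10240 / n ^ 2) + 640 / n * ∑' s : ℕ, ((s : ℝ) + 1) ^ 2 * (7 / 8) ^ s := by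
        gcongr
        · exact n.sub_le 2
        · exact summable_sq_mul_geometric.sum_le_tsum _ fun s _ => by positivity
    _ = (10240 + 640 * ∑' s : ℕ, ((s : ℝ) + 1) ^ 2 * (7 / 8) ^ s) / n := by
        field_simp

end PairSum

end RandomHypercube

open RandomHypercube in
/-- The total pair sum over all pairs with at least two gaps vanishes as `n → ∞`. -/
theorem sum_c_two_or_more_gaps_tendsto_zero :
    Tendsto (fun n : ℕ =>
        ∑ s ∈ Finset.Icc 1 (n - 2),
          ∑ g ∈ Finset.Icc 2 (min (s + 1) ((n - s) / 2)), c n s g)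
      atTop (nhds 0) := by
  refine tendsto_of_tendsto_of_tendsto_of_le_of_le' tendsto_const_nhds
    (tendsto_const_div_atTop_nhds_zero_nat _) (.of_forall fun n => ?_)
    (eventually_atTop.2 ⟨320, fun n hn => sum_sum_c_two_or_more_gaps_le hn⟩)
  exact Finset.sum_nonneg fun s _ => Finset.sum_nonneg fun g _ => c_nonneg n s g
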